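/- The section at the level-three vertex 111 of the normal closure K of (ab)² in the first Grigorchuk group contains all of Γ: for every g ∈ Γ there exists h ∈ K such that h (true :: true :: true :: w) = true :: true :: true :: g w for all w : List Bool. -/

import Mathlib

/-!
For a subgroup `N` of `Equiv.Perm (List Bool)`, let `sec N` be the group of all sections at the
vertex `1` of those elements of `N` that fix this vertex. Every element of `Γ` is itself the section
at `1` of an element of `Γ` (`exists_lift`), so if `N` is normalized by `Γ`, then so is `sec N`
(`normalized_sec`). The set of sections of `K` at the vertex `111` contains `sec (sec (sec K))`,
hence it suffices to find generators of `Γ` there: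

* `(ab)²` has section `ac` at `1`, so `ac ∈ sec K`;
* `sec K` is normalized by `Γ`, so it also contains `(ac)(d(ac)d)⁻¹ = (ad)²`, whose section at `1`
  is `b`, and `(ac)²`, whose section at `1` is `ad`; thus `b, ad ∈ sec (sec K)`;
* `b`, `aba` and `(ad)²` lie in `sec (sec K)` and have sections `c`, `a` and `b` at `1`.

Finally `d = bc`.
-/

namespace Grigorchuk

/-- Underlying map of the Grigorchuk generator `a`: flip the first letter. -/
def aF : List Bool → List Bool
  | [] => []
  | x :: w => (!x) :: w

mutual
  /-- Underlying map of the Grigorchuk generator `b`. -/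
  def bF : List Bool → List Bool
    | [] => []
    | false :: w => false :: aF w
    | true :: w => true :: cF w
  /-- Underlying map of the Grigorchuk generator `c`. -/
  def cF : List Bool → List Bool
    | [] => []
    | false :: w => false :: aF w
    | true :: w => true :: dF w
  /-- Underlying map of the Grigorchuk generator `d`. -/
  def dF : List Bool → List Bool
    | [] => []
    | false :: w => false :: w
    | true :: w => true :: bF w
end

theorem aF_aF : ∀ w : List Bool, aF (aF w) = w := by
  intro w
  cases w with
  | nil => rfl
  | cons x w => simp [aF]

theorem bcd_invol : ∀ w : List Bool,
    bF (bF w) = w ∧ cF (cF w) = w ∧ dF (dF w) = w := by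
  intro w
  induction w with
  | nil => simp [bF, cF, dF]
  | cons x w ih =>
    cases x <;> simp [bF, cF, dF, aF_aF, ih.1, ih.2.1, ih.2.2]

/-- The Grigorchuk generator `a` as a permutation of `List Bool`. -/
def a : Equiv.Perm (List Bool) := ⟨aF, aF, aF_aF, aF_aF⟩

/-- The Grigorchuk generator `b` as a permutation of `List Bool`. -/
def b : Equiv.Perm (List Bool) :=
  ⟨bF, bF, fun w => (bcd_invol w).1, fun w => (bcd_invol w).1⟩

/-- The Grigorchuk generator `c` as a permutation of `List Bool`. -/
def c : Equiv.Perm (List Bool) :=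
  ⟨cF, cF, fun w => (bcd_invol w).2.1, fun w => (bcd_invol w).2.1⟩

/-- The Grigorchuk generator `d` as a permutation of `List Bool`. -/
def d : Equiv.Perm (List Bool) :=
  ⟨dF, dF, fun w => (bcd_invol w).2.2, fun w => (bcd_invol w).2.2⟩

/-- Underlying map of the pair `(g, h)` acting on the two subtrees. -/
def pairF (g h : List Bool → List Bool) : List Bool → List Bool
  | [] => []
  | false :: w => false :: g w
  | true :: w => true :: h w

/-- The permutation of `List Bool` acting as `g` on the subtree below `false`
and as `h` on the subtree below `true`, fixing the root. -/
def pair (g h : Equiv.Perm (List Bool)) : Equiv.Perm (List Bool) :=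
  ⟨pairF g h, pairF g.symm h.symm,
    fun w => by cases w with
      | nil => rfl
      | cons x w => cases x <;> simp [pairF],
    fun w => by cases w with
      | nil => rfl
      | cons x w => cases x <;> simp [pairF]⟩

/-- The first Grigorchuk group: the subgroup of `Equiv.Perm (List Bool)`
generated by `a`, `b`, `c`, `d`. -/
def Γ : Subgroup (Equiv.Perm (List Bool)) := Subgroup.closure {a, b, c, d}

/-- The normal closure in `Γ` of the element `(a * b)^2`, realized as the subgroup
of `Equiv.Perm (List Bool)` generated by all `Γ`-conjugates of `(a * b)^2`. -/
def K : Subgroup (Equiv.Perm (List Bool)) :=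
  Subgroup.closure {g | ∃ x ∈ Γ, g = x * (a * b) ^ 2 * x⁻¹}

end Grigorchuk

namespace Grigorchuk

@[simp] lemma a_cons (x : Bool) (w : List Bool) : a (x :: w) = (!x) :: w := rfl
@[simp] lemma b_false (w : List Bool) : b (false :: w) = false :: a w := by
  change bF _ = _; rw [bF]; rfl
@[simp] lemma b_true (w : List Bool) : b (true :: w) = true :: c w := by
  change bF _ = _; rw [bF]; rfl
@[simp] lemma c_false (w : List Bool) : c (false :: w) = false :: a w := by
  change cF _ = _; rw [cF]; rfl
@[simp] lemma c_true (w : List Bool) : c (true :: w) = true :: d w := by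
  change cF _ = _; rw [cF]; rfl
@[simp] lemma d_false (w : List Bool) : d (false :: w) = false :: w := by
  change dF _ = _; rw [dF]
@[simp] lemma d_true (w : List Bool) : d (true :: w) = true :: b w := by
  change dF _ = _; rw [dF]; rfl

@[simp] lemma a_a (w : List Bool) : a (a w) = w := aF_aF w
@[simp] lemma b_b (w : List Bool) : b (b w) = w := (bcd_invol w).1
@[simp] lemma c_c (w : List Bool) : c (c w) = w := (bcd_invol w).2.1
@[simp] lemma d_d (w : List Bool) : d (d w) = w := (bcd_invol w).2.2

lemma a_inv : a⁻¹ = a := rfl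
lemma c_inv : c⁻¹ = c := rfl
lemma d_inv : d⁻¹ = d := rfl

lemma bcd_mul_apply (w : List Bool) :
    b (c w) = d w ∧ c (d w) = b w ∧ d (b w) = c w := by
  induction w with
  | nil => simp [b, c, d, bF, cF, dF]
  | cons x w ih => cases x <;> simp [ih]

lemma b_mul_c : b * c = d := Equiv.ext fun w => (bcd_mul_apply w).1

lemma c_mul_d_apply (w : List Bool) : c (d w) = b w := (bcd_mul_apply w).2.1

lemma c_mul_d_mul_c : c * d * c = d := by
  ext1 w
  simp only [Equiv.Perm.mul_apply, c_mul_d_apply]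
  exact (bcd_mul_apply w).1

lemma a_mem : a ∈ Γ := Subgroup.subset_closure (by simp)
lemma b_mem : b ∈ Γ := Subgroup.subset_closure (by simp)
lemma c_mem : c ∈ Γ := Subgroup.subset_closure (by simp)
lemma d_mem : d ∈ Γ := Subgroup.subset_closure (by simp)

/-- The sections at the vertex `1` (the word `[true]`) of those elements of `N` that fix this
vertex. -/
def sec (N : Subgroup (Equiv.Perm (List Bool))) : Subgroup (Equiv.Perm (List Bool)) where
  carrier := {g | ∃ h ∈ N, ∀ w, h (true :: w) = true :: g w}
  one_mem' := ⟨1, N.one_mem, fun _ => rfl⟩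
  mul_mem' := by
    rintro g g' ⟨h, hN, hh⟩ ⟨h', hN', hh'⟩
    exact ⟨h * h', N.mul_mem hN hN', fun w => by simp [hh, hh']⟩
  inv_mem' := by
    rintro g ⟨h, hN, hh⟩
    exact ⟨h⁻¹, N.inv_mem hN, fun w => by rw [Equiv.Perm.inv_eq_iff_eq, hh]; simp⟩

/-- `Γ` is self-replicating at the vertex `1`. -/
lemma exists_lift : Γ ≤ sec Γ := by
  refine (Subgroup.closure_le _).2 ?_
  rintro g (rfl | rfl | rfl | rfl)
  · exact ⟨a * b * a, mul_mem (mul_mem a_mem b_mem) a_mem, fun w => by simp⟩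
  · exact ⟨d, d_mem, fun w => by simp⟩
  · exact ⟨b, b_mem, fun w => by simp⟩
  · exact ⟨c, c_mem, fun w => by simp⟩

/-- `N` is stable under conjugation by `Γ`; it is not required that `N ≤ Γ`. -/
def Normalized (N : Subgroup (Equiv.Perm (List Bool))) : Prop :=
  ∀ x ∈ Γ, ∀ g ∈ N, x * g * x⁻¹ ∈ N

lemma normalized_sec {N : Subgroup (Equiv.Perm (List Bool))} (hN : Normalized N) :
    Normalized (sec N) := by
  rintro x hx g ⟨h, hh, hg⟩
  obtain ⟨y, hy, hyx⟩ := exists_lift hx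
  refine ⟨y * h * y⁻¹, hN y hy h hh, fun w => ?_⟩
  have hinv : y⁻¹ (true :: w) = true :: x⁻¹ w := by
    rw [Equiv.Perm.inv_eq_iff_eq, hyx]; simp
  simp [-Equiv.Perm.coe_inv, hinv, hg, hyx]

lemma normalized_K : Normalized K := by
  intro x hx g hg
  induction hg using Subgroup.closure_induction with
  | mem g hg =>
    obtain ⟨y, hy, rfl⟩ := hg
    exact Subgroup.subset_closure ⟨x * y, mul_mem hx hy, by group⟩
  | one => simp
  | mul g g' _ _ h h' =>
    have := mul_mem h h'
    rwa [show x * g * x⁻¹ * (x * g' * x⁻¹) = x * (g * g') * x⁻¹ by group] at this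
  | inv g _ h =>
    have := inv_mem h
    rwa [show (x * g * x⁻¹)⁻¹ = x * g⁻¹ * x⁻¹ by group] at this

lemma ac_mem : a * c ∈ sec K := by
  refine ⟨(a * b) ^ 2, Subgroup.subset_closure ⟨1, one_mem _, by simp⟩, fun w => ?_⟩
  simp [pow_two]

lemma ad_mem : a * d ∈ sec (sec K) :=
  ⟨(a * c) ^ 2, pow_mem ac_mem 2, fun w => by simp [pow_two]⟩

lemma b_mem_sec_sec : b ∈ sec (sec K) := by
  refine ⟨(a * d) ^ 2, ?_, fun w => by simp [pow_two]⟩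
  have h := mul_mem ac_mem (inv_mem (normalized_sec normalized_K d d_mem _ ac_mem))
  have e : a * c * (d * (a * c) * d⁻¹)⁻¹ = (a * d) ^ 2 := by
    calc a * c * (d * (a * c) * d⁻¹)⁻¹ = a * (c * d * c⁻¹) * a⁻¹ * d⁻¹ := by group
      _ = (a * d) ^ 2 := by
        rw [c_inv, c_mul_d_mul_c, a_inv, d_inv, pow_two, mul_assoc (a * d)]
  rwa [e] at h

lemma le_sec_sec_sec : Γ ≤ sec (sec (sec K)) := by
  have hb : b ∈ sec (sec (sec K)) :=
    ⟨(a * d) ^ 2, pow_mem ad_mem 2, fun w => by simp [pow_two]⟩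
  have hc : c ∈ sec (sec (sec K)) := ⟨b, b_mem_sec_sec, fun w => by simp⟩
  have ha : a ∈ sec (sec (sec K)) :=
    ⟨a * b * a⁻¹, normalized_sec (normalized_sec normalized_K) a a_mem b b_mem_sec_sec,
      fun w => by rw [a_inv]; simp⟩
  refine (Subgroup.closure_le _).2 ?_
  rintro g (rfl | rfl | rfl | rfl)
  · exact ha
  · exact hb
  · exact hc
  · rw [← b_mul_c]
    exact mul_mem hb hc

end Grigorchuk

open Grigorchuk in
/-- The section at the level-three vertex `111` of the normal closure `K` of `(ab)²`
in the first Grigorchuk group contains all of `Γ`. -/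
theorem grigorchuk_K_section (g : Equiv.Perm (List Bool)) (hg : g ∈ Γ) :
    ∃ h ∈ K, ∀ w : List Bool,
      h (true :: true :: true :: w) = true :: true :: true :: g w := by
  obtain ⟨h₂, ⟨h₁, ⟨h, hK, e⟩, e₁⟩, e₂⟩ := le_sec_sec_sec hg
  exact ⟨h, hK, fun w => by rw [e, e₁, e₂]⟩
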